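/- Let V be a vector space over a field of characteristic 0 and let Lₚ(V), L_q(V) be the degree-p and degree-q components of the free Lie algebra inside T(V). Then for a ∈ Lₚ(V) and b ∈ L_q(V), the element a⊗b − (−1)^{pq} b⊗a of V^{⊗(p+q)} lies in L_{p+q}(V); i.e., the (graded) commutator in T(V) of homogeneous elements of the free Lie algebra again lies in the free Lie algebra. -/

import Mathlib

/-!
Write `L n` for the span of the left-normed graded brackets of length `n + 1`. Appending a vector
to a left-normed bracket is bracketing with that vector, so `[L n, V] ⊆ L (n + 1)`. The inclusion
`[L p, L q] ⊆ L (p + q + 1)` then follows by induction on `q`: a generator of `L (q + 1)` is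
`[y, v]` with `y ∈ L q` and `v ∈ V`, and the graded Jacobi identity
`[a, [y, v]] = [[a, y], v] - (-1)^|y| [[a, v], y]`
reduces the bracket with `[y, v]` to brackets with `y` and with `v`.
-/

/-- Auxiliary function computing a left-normed graded commutator: `glnbAux a p l`
brackets the (degree `p`) element `a` successively with the degree-one elements of
`l`, using the graded bracket `[x,b] = x*b − (−1)^{|x|} b*x`. -/
def glnbAux {A : Type*} [Ring A] : A → ℕ → List A → A
  | a, _, [] => a
  | a, p, b :: l => glnbAux (a * b - ((-1 : ℤ) ^ p) • (b * a)) (p + 1) l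

/-- The left-normed graded commutator `[...[v₁,v₂],...,vₙ]` of `n ≥ 1` elements of
`V ⊆ T(V)`, each placed in degree one. -/
noncomputable def glnbF (k : Type*) (V : Type*) [CommRing k] [AddCommGroup V]
    [Module k V] {n : ℕ} (v : Fin (n + 1) → V) : TensorAlgebra k V :=
  glnbAux (TensorAlgebra.ι k (v 0)) 1
    (List.ofFn fun i : Fin n => TensorAlgebra.ι k (v i.succ))

/-- The degree-`(n + 1)` component of the free graded Lie algebra inside the tensor algebra: the
span of the left-normed graded brackets of `n + 1` vectors. -/
noncomputable def lieComp (k : Type*) (V : Type*) [CommRing k] [AddCommGroup V] [Module k V]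
    (n : ℕ) : Submodule k (TensorAlgebra k V) :=
  Submodule.span k {x | ∃ v : Fin (n + 1) → V, x = glnbF k V v}

theorem glnbAux_concat {A : Type*} [Ring A] (l : List A) (a b : A) (p : ℕ) :
    glnbAux a p (l ++ [b]) =
      glnbAux a p l * b - ((-1 : ℤ) ^ (p + l.length)) • (b * glnbAux a p l) := by
  induction l generalizing a p with
  | nil => simp [glnbAux]
  | cons c l ih =>
    simp only [List.cons_append, glnbAux, ih, List.length_cons]
    rw [show p + 1 + l.length = p + (l.length + 1) by omega]

/-- A left-normed bracket of length `n + 2` is the bracket of its first `n + 1` entries with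
its last one. -/
theorem glnbF_succ (k : Type*) (V : Type*) [CommRing k] [AddCommGroup V] [Module k V]
    {n : ℕ} (w : Fin (n + 1 + 1) → V) :
    glnbF k V w = glnbF k V (Fin.init w) * TensorAlgebra.ι k (w (Fin.last _))
      - ((-1 : k) ^ (n + 1)) • (TensorAlgebra.ι k (w (Fin.last _)) * glnbF k V (Fin.init w)) := by
  have h : (List.ofFn fun i : Fin (n + 1) => TensorAlgebra.ι k (w i.succ)) =
      (List.ofFn fun i : Fin n => TensorAlgebra.ι k (Fin.init w i.succ)) ++
        [TensorAlgebra.ι k (w (Fin.last _))] := by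
    rw [List.ofFn_succ', List.concat_eq_append]
    rfl
  unfold glnbF
  rw [h, glnbAux_concat, List.length_ofFn, add_comm 1 n]
  have h0 : Fin.init w 0 = w 0 := rfl
  rw [h0]
  -- The recursion uses integer signs and the statement signs in `k`; they agree by parity.
  rcases Nat.even_or_odd (n + 1) with o | o <;> simp [o.neg_one_pow]

theorem lieComp_bracket_ι {k : Type*} {V : Type*} [CommRing k] [AddCommGroup V] [Module k V]
    {n : ℕ} {x : TensorAlgebra k V} (hx : x ∈ lieComp k V n) (v : V) :
    x * TensorAlgebra.ι k v - ((-1 : k) ^ (n + 1)) • (TensorAlgebra.ι k v * x) ∈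
      lieComp k V (n + 1) := by
  induction hx using Submodule.span_induction with
  | mem x hx =>
    obtain ⟨w, rfl⟩ := hx
    refine Submodule.subset_span ⟨Fin.snoc w v, ?_⟩
    rw [glnbF_succ, Fin.init_snoc, Fin.snoc_last]
  | zero => simp
  | add x y _ _ h₁ h₂ =>
    convert add_mem h₁ h₂ using 1
    simp only [add_mul, mul_add, smul_add]
    abel
  | smul c x _ h =>
    convert Submodule.smul_mem _ c h using 1
    rw [smul_sub, smul_mul_assoc, mul_smul_comm, smul_comm c]

/-- The graded Jacobi identity for elements `a`, `y`, `v` of degrees `p + 1`, `q + 1` and `1`. -/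
theorem graded_jacobi {k A : Type*} [CommRing k] [Ring A] [Algebra k A] (p q : ℕ) (a y v : A) :
    a * (y * v - ((-1 : k) ^ (q + 1)) • (v * y))
        - ((-1 : k) ^ ((p + 1) * (q + 1 + 1))) • ((y * v - ((-1 : k) ^ (q + 1)) • (v * y)) * a) =
      ((a * y - ((-1 : k) ^ ((p + 1) * (q + 1))) • (y * a)) * v
        - ((-1 : k) ^ (p + q + 1 + 1)) •
          (v * (a * y - ((-1 : k) ^ ((p + 1) * (q + 1))) • (y * a))))
      - ((-1 : k) ^ (q + 1)) •
        ((a * v - ((-1 : k) ^ (p + 1)) • (v * a)) * y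
          - ((-1 : k) ^ ((p + 1 + 1) * (q + 1))) •
            (y * (a * v - ((-1 : k) ^ (p + 1)) • (v * a)))) := by
  -- Every sign depends only on the parities of `p` and `q`.
  rcases Nat.even_or_odd p with hp | hp <;> rcases Nat.even_or_odd q with hq | hq <;>
  simp [pow_add, pow_mul, hp.neg_one_pow, hq.neg_one_pow, mul_add, add_mul, mul_sub, sub_mul,
    mul_assoc] <;> abel

theorem lieComp_bracket_glnbF {k : Type*} {V : Type*} [CommRing k] [AddCommGroup V] [Module k V]
    (q : ℕ) : ∀ (p : ℕ) (a : TensorAlgebra k V), a ∈ lieComp k V p → ∀ w : Fin (q + 1) → V,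
    a * glnbF k V w - ((-1 : k) ^ ((p + 1) * (q + 1))) • (glnbF k V w * a) ∈
      lieComp k V (p + q + 1) := by
  induction q with
  | zero =>
    intro p a ha w
    simpa [glnbF, glnbAux] using lieComp_bracket_ι ha (w 0)
  | succ q ih =>
    intro p a ha w
    rw [glnbF_succ, graded_jacobi]
    refine sub_mem (lieComp_bracket_ι (ih p a ha _) _) (Submodule.smul_mem _ _ ?_)
    have h := ih (p + 1) _ (lieComp_bracket_ι ha (w (Fin.last _))) (Fin.init w)
    rwa [show p + 1 + q + 1 = p + (q + 1) + 1 by omega] at h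

/-- For `a` in the degree-`(p+1)` component `L_{p+1}(V)` of the free (graded) Lie
algebra inside `T(V)` (the span of left-normed graded brackets of length `p+1`) and
`b ∈ L_{q+1}(V)`, the graded commutator `a⊗b − (−1)^{(p+1)(q+1)} b⊗a` lies in
`L_{(p+1)+(q+1)}(V)`. -/
theorem stmt11 (k : Type*) [Field k] [CharZero k] (V : Type*) [AddCommGroup V] [Module k V]
    (p q : ℕ) (a b : TensorAlgebra k V)
    (ha : a ∈ Submodule.span k {x | ∃ v : Fin (p + 1) → V, x = glnbF k V v})
    (hb : b ∈ Submodule.span k {x | ∃ v : Fin (q + 1) → V, x = glnbF k V v}) :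
    a * b - ((-1 : k) ^ ((p + 1) * (q + 1))) • (b * a) ∈
      Submodule.span k {x | ∃ v : Fin (p + q + 1 + 1) → V, x = glnbF k V v} := by
  change _ ∈ lieComp k V (p + q + 1)
  induction hb using Submodule.span_induction with
  | mem x hx =>
    obtain ⟨w, rfl⟩ := hx
    exact lieComp_bracket_glnbF q p a ha w
  | zero => simp
  | add x y _ _ h₁ h₂ =>
    convert add_mem h₁ h₂ using 1
    simp only [add_mul, mul_add, smul_add]
    abel
  | smul c x _ h =>
    convert Submodule.smul_mem _ c h using 1
    rw [smul_sub, smul_mul_assoc, mul_smul_comm, smul_comm c]
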